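/- arXiv:1310.5519 — 2 statements merged into one kernel-verified Lean document; each statement's English description precedes it below -/
import Mathlib

section
/- Let n ∈ ω, let ⪯ be a total order on {1,...,n-1}, let R ⊆ 2^ω be a perfect subset, let M be a metric space, and let c : [R]^n_⪯ → M be a Baire measurable mapping. Then there exists a perfect subset T ⊆ R such that the restriction of c to [T]^n_⪯ is continuous. -/
/-!
The proof is a Baire category argument in the space `C(2^ω, R)` of continuous maps.

The set `[R]^n_⪯` is homeomorphic to an open subset `U` of `Rⁿ` (`isOpen_ordTuples_univ`). If `c` is
continuous on a residual subset `G` of `U`, then `U \ G` is meagre in `Rⁿ`, and Mycielski's theorem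
(`mycielski`) says that a generic `φ : 2^ω → R` maps tuples of distinct points outside `U \ G`. A
generic `φ` is also injective, because `R` is perfect. Its range `T` is then a perfect set with
`[T]^n_⪯` contained in `G`, and `c` is continuous on `[T]^n_⪯`.

The main point is the existence of `G` (`exists_residual_continuousOn_metric`) when `M` is not
assumed separable. For each `ε = 1 / (k + 1)`, the space `M` is partitioned into pieces of small
diameter such that every union of pieces is an `F_σ` set (`exists_discrete_selector`); hence every
union of their preimages under `c` has the Baire property. For such a partition of a Polish space,
the union of all meagre pieces is meagre (`isMeagre_preimage`). Otherwise every nonmeagre Borel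
subset of this union meets continuum many pieces (`continuum_le_mk_image`, again by Mycielski's
theorem), and a Bernstein-type subfamily of the pieces (`exists_bernstein`) would have a union
without the Baire property. Only countably many pieces are nonmeagre
(`countable_nonmeagre_fibres`), so outside a meagre set `c` is approximated within `ε` by maps with
countably many values, and the classical argument for second countable targets goes through.
-/

open Set

/-- The Cantor space `2^ω`. -/
abbrev Cantor : Type := ℕ → Bool

/-- The first coordinate where `x` and `y` differ (`0` if `x = y`). -/
noncomputable def splitLevel (x y : Cantor) : ℕ :=
  letI := Classical.dec (x = y)
  if h : x = y then 0 else Nat.find (Function.ne_iff.mp h)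

/-- The metric `d(x,y) = 1/(k+1)`, `k = min{m : x m ≠ y m}`. -/
noncomputable def cdist (x y : Cantor) : ℝ := 1 / (splitLevel x y + 1)

/-- The lexicographic order on `2^ω` induced by `0 < 1`. -/
def clex (x y : Cantor) : Prop := x ≠ y ∧ x (splitLevel x y) = false

/-- The initial segment `x ↾ k` as an element of `2^{<ω}`. -/
def restr (x : Cantor) (k : ℕ) : List Bool := (List.range k).map x

/-- The longest common initial segment `x ∩ y`. -/
noncomputable def meet (x y : Cantor) : List Bool := restr x (splitLevel x y)

/-- A perfect subset of `2^ω`: nonempty, closed, with no isolated points. -/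
def PerfectSet (P : Set Cantor) : Prop := Perfect P ∧ P.Nonempty

/-- A skew subset of `2^ω`. -/
def Skew (P : Set Cantor) : Prop :=
  ∀ x₀ ∈ P, ∀ x₁ ∈ P, ∀ y₀ ∈ P, ∀ y₁ ∈ P, x₀ ≠ x₁ → y₀ ≠ y₁ →
    cdist x₀ x₁ = cdist y₀ y₁ → meet x₀ x₁ = meet y₀ y₁

/-- Index `i - 1` of the `i`-th gap (for `i ∈ {1,…,n-1}`, reindexed by `Fin (n-1)`). -/
def gapIdx {n : ℕ} (i : Fin (n - 1)) : Fin n := ⟨i.1, by have := i.2; omega⟩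

/-- Index `i` of the `i`-th gap. -/
def gapIdx' {n : ℕ} (i : Fin (n - 1)) : Fin n := ⟨i.1 + 1, by have := i.2; omega⟩

/-- `|x_{i-1} ∩ x_i|` for the `i`-th gap of the tuple `X`. -/
noncomputable def gapLen {n : ℕ} (X : Fin n → Cantor) (i : Fin (n - 1)) : ℕ :=
  splitLevel (X (gapIdx i)) (X (gapIdx' i))

/-- `x_{i-1} ∩ x_i` for the `i`-th gap of the tuple `X`. -/
noncomputable def gapMeet {n : ℕ} (X : Fin n → Cantor) (i : Fin (n - 1)) : List Bool :=
  meet (X (gapIdx i)) (X (gapIdx' i))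

/-- `[T]^n` : lexicographically increasing `n`-tuples of elements of `T`. -/
def Tuples (n : ℕ) (T : Set Cantor) : Set (Fin n → Cantor) :=
  {X | (∀ i, X i ∈ T) ∧ ∀ i j : Fin n, i < j → clex (X i) (X j)}

/-- `[T]^n_⪯` : members of `[T]^n` whose gap distances realize the total order `⪯`
(on `{1,…,n-1}`, reindexed by `Fin (n-1)`):
`d(x_{i-1},x_i) > d(x_{j-1},x_j)` iff `i ⪯ j`, for `i ≠ j`. -/
def OrdTuples (n : ℕ) (prec : Fin (n - 1) → Fin (n - 1) → Prop) (T : Set Cantor) :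
    Set (Fin n → Cantor) :=
  {X | X ∈ Tuples n T ∧ ∀ i j : Fin (n - 1), i ≠ j →
      (cdist (X (gapIdx i)) (X (gapIdx' i)) > cdist (X (gapIdx j)) (X (gapIdx' j)) ↔ prec i j)}

/-- `D(X) = {x_{i-1} ∩ x_i : i ∈ {1,…,n-1}}`. -/
def Dset (n : ℕ) (X : Fin n → Cantor) : Set (List Bool) :=
  {t | ∃ i : Fin (n - 1), t = gapMeet X i}

/-- `D̂(X) = D(X) ∪ {x_i ↾ |x_{j-1} ∩ x_j| : i ≠ j}`. -/
def Dhat (n : ℕ) (X : Fin n → Cantor) : Set (List Bool) :=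
  Dset n X ∪ {t | ∃ (i : Fin n) (j : Fin (n - 1)), (i : ℕ) ≠ (j : ℕ) + 1 ∧
    t = restr (X i) (gapLen X j)}

/-- The abstract index set for the nodes of `D̂(X)`; it serves as the fixed
representative `C^n_⪯` of the isomorphism class of the trees `D̂(X)`,
`X ∈ [2^ω]^n_⪯`, the isomorphism `g_X : D̂(X) → C^n_⪯` being the indexing. -/
abbrev CIdx (n : ℕ) : Type := Fin (n - 1) ⊕ Fin n × Fin (n - 1)

/-- The node of `D̂(X)` indexed by a given element of `C^n_⪯`: `inl j` indexes
`x_{j-1} ∩ x_j` and `inr (i, j)` indexes `x_i ↾ |x_{j-1} ∩ x_j|`. -/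
noncomputable def nodeOf {n : ℕ} (X : Fin n → Cantor) : CIdx n → List Bool
  | .inl j => gapMeet X j
  | .inr (i, j) => restr (X i) (gapLen X j)

/-- `D̂(X):J = {x ↾ k : g_X(x ↾ k) ∈ J}` for `J ⊆ C^n_⪯`. -/
noncomputable def DhatSel {n : ℕ} (X : Fin n → Cantor) (J : Set (CIdx n)) : Set (List Bool) :=
  nodeOf X '' J

/-- A map is Baire measurable if preimages of open sets have the Baire property. -/
def BaireMeasurableFun {α β : Type*} [TopologicalSpace α] [TopologicalSpace β]
    (f : α → β) : Prop :=
  ∀ U : Set β, IsOpen U → BaireMeasurableSet (f ⁻¹' U)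

open Filter Topology Cardinal

/-! ### Mycielski's theorem for independent tuples -/

theorem exists_level_of_injective {n : ℕ} {t : Fin n → Cantor} (ht : Function.Injective t) :
    ∃ k : ℕ, ∀ i j, i ≠ j → ∃ l < k, t i l ≠ t j l := by
  have h : ∀ p : Fin n × Fin n, ∃ l, p.1 ≠ p.2 → t p.1 l ≠ t p.2 l := fun p => by
    by_cases hp : p.1 = p.2
    · exact ⟨0, fun h => absurd hp h⟩
    · obtain ⟨l, hl⟩ := Function.ne_iff.mp (fun h => hp (ht h))
      exact ⟨l, fun _ => hl⟩
  choose l hl using h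
  refine ⟨Finset.univ.sup l + 1, fun i j hij => ⟨l (i, j), ?_, hl (i, j) hij⟩⟩
  exact Nat.lt_succ_of_le (Finset.le_sup (f := l) (Finset.mem_univ (i, j)))

/-- Uniform continuity on the compact space `2^ω`, phrased with initial segments. -/
theorem exists_modulus {Z : Type} [MetricSpace Z] (φ : C(Cantor, Z)) {ε : ℝ} (hε : 0 < ε) :
    ∃ m : ℕ, ∀ x y : Cantor, (∀ l < m, x l = y l) → dist (φ x) (φ y) < ε := by
  let _ : MetricSpace Cantor :=
    PiNat.metricSpaceOfDiscreteUniformity (E := fun _ => Bool) (fun _ => rfl)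
  have hu : UniformContinuous φ := CompactSpace.uniformContinuous_of_continuous φ.continuous
  obtain ⟨δ, hδ, h⟩ := Metric.uniformContinuous_iff.mp hu ε hε
  obtain ⟨m, hm⟩ := exists_pow_lt_of_lt_one hδ (by norm_num : (1 / 2 : ℝ) < 1)
  refine ⟨m, fun x y hxy => h (lt_of_le_of_lt ?_ hm)⟩
  exact (PiNat.mem_cylinder_iff_dist_le (E := fun _ => Bool)).mp hxy

/-- For a finite index set `W` and a dense open `O ⊆ Zⁿ`, the families `a : W → Z` all of whose
`n`-tuples with distinct indices lie in `O` are dense. -/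
theorem dense_selector {Z : Type} [TopologicalSpace Z] {n : ℕ} {W : Type} [Finite W]
    [BaireSpace (W → Z)]
    {O : Set (Fin n → Z)} (hO : IsOpen O) (hd : Dense O) :
    Dense {a : W → Z | ∀ u : Fin n → W, Function.Injective u → a ∘ u ∈ O} := by
  have : {a : W → Z | ∀ u : Fin n → W, Function.Injective u → a ∘ u ∈ O} =
      ⋂ u : {u : Fin n → W // Function.Injective u}, (fun a : W → Z => a ∘ u.1) ⁻¹' O := by
    ext a; simp
  rw [this]
  classical
  have : Countable {u : Fin n → W // Function.Injective u} := inferInstance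
  refine dense_iInter_of_isOpen (fun u => hO.preimage (by fun_prop)) fun u => hd.preimage ?_
  -- The map `a ↦ a ∘ u` is open: near `a ∘ u`, the inverse branch `b ↦ extend u b a` is continuous.
  intro V hV
  rw [isOpen_iff_mem_nhds]
  rintro _ ⟨a, ha, rfl⟩
  have hc : Continuous fun b : Fin n → Z => Function.extend u.1 b a := by
    refine continuous_pi fun w => ?_
    by_cases hw : ∃ i, u.1 i = w
    · obtain ⟨i, rfl⟩ := hw
      simpa [u.2.extend_apply] using continuous_apply i
    · simpa [Function.extend_apply' _ _ _ hw] using continuous_const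
  have h0 : Function.extend u.1 (a ∘ u.1) a = a := by
    funext w
    by_cases hw : ∃ i, u.1 i = w
    · obtain ⟨i, rfl⟩ := hw
      simp [u.2.extend_apply]
    · simp [Function.extend_apply' _ _ _ hw]
  have := hc.continuousAt.preimage_mem_nhds (x := a ∘ u.1) (by simpa [h0] using hV.mem_nhds ha)
  filter_upwards [this] with b hb
  exact ⟨_, hb, funext fun i => by simp [u.2.extend_apply]⟩

/-- The single step of Mycielski's theorem: for a dense open `O ⊆ Zⁿ`, generic `φ : 2^ω → Z` sends
every tuple whose entries are already pairwise distinct below level `k` into `O`. The set of such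
tuples is compact, which gives openness; density comes from approximating `φ` by a map depending on
finitely many coordinates, with values chosen by `dense_selector`. -/
theorem mycielski_open {Z : Type} [MetricSpace Z] [CompleteSpace Z] {n : ℕ}
    {O : Set (Fin n → Z)} (hO : IsOpen O) (hd : Dense O) (k : ℕ) :
    {φ : C(Cantor, Z) | ∀ t : Fin n → Cantor, (∀ i j, i ≠ j → ∃ l < k, t i l ≠ t j l) →
      φ ∘ t ∈ O} ∈ residual C(Cantor, Z) := by
  refine residual_of_dense_open ?_ ?_
  · have hK : IsCompact {t : Fin n → Cantor | ∀ i j, i ≠ j → ∃ l < k, t i l ≠ t j l} := by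
      refine IsClosed.isCompact ?_
      have : {t : Fin n → Cantor | ∀ i j, i ≠ j → ∃ l < k, t i l ≠ t j l} =
          ⋂ i, ⋂ j, ⋂ (_ : i ≠ j), ⋃ l ∈ Finset.range k, {t : Fin n → Cantor | t i l ≠ t j l} := by
        ext t; simp
      rw [this]
      refine isClosed_iInter fun i => isClosed_iInter fun j => isClosed_iInter fun _ =>
        Set.Finite.isClosed_biUnion (Finset.finite_toSet _) fun l _ => ?_
      have : Continuous fun t : Fin n → Cantor => (t i l, t j l) := by fun_prop
      exact (isClosed_discrete {p : Bool × Bool | p.1 ≠ p.2}).preimage this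
    let Φ : C(Cantor, Z) → C(Fin n → Cantor, Fin n → Z) :=
      fun φ => ⟨fun t => φ ∘ t, by fun_prop⟩
    have hΦ : Continuous Φ := by
      refine ContinuousMap.continuous_of_continuous_uncurry _ ?_
      refine continuous_pi fun i => ?_
      show Continuous fun p : C(Cantor, Z) × (Fin n → Cantor) => p.1 (p.2 i)
      fun_prop
    exact (ContinuousMap.isOpen_setOfPred_mapsTo hK hO).preimage hΦ
  · refine Metric.dense_iff.mpr fun φ ε hε => ?_
    -- Taking `m ≥ k` makes tuples separated below level `k` have distinct restrictions to `m`.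
    obtain ⟨m₀, hm₀⟩ := exists_modulus φ (show 0 < ε / 4 by positivity)
    let m := max m₀ k
    let e : (Fin m → Bool) → Cantor := fun u l => if h : l < m then u ⟨l, h⟩ else false
    let r : Cantor → (Fin m → Bool) := fun x l => x l
    have hr : Continuous r := by fun_prop
    obtain ⟨a, ha, haO⟩ := Metric.dense_iff.mp
      (dense_selector (W := Fin m → Bool) hO hd) (φ ∘ e) (ε / 4) (by positivity)
    refine ⟨⟨a ∘ r, continuous_of_discreteTopology.comp hr⟩, ?_, ?_⟩
    · rw [Metric.mem_ball]
      refine lt_of_le_of_lt ((ContinuousMap.dist_le (show 0 ≤ ε / 2 by positivity)).mpr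
        fun x => ?_) (half_lt_self hε)
      have h1 : dist (a (r x)) (φ (e (r x))) < ε / 4 :=
        lt_of_le_of_lt (dist_le_pi_dist a (φ ∘ e) (r x)) ha
      have h2 : dist (φ (e (r x))) (φ x) < ε / 4 := hm₀ _ _ fun l hl => by
        have : l < m := lt_of_lt_of_le hl (le_max_left _ _)
        simp [e, r, this]
      have := dist_triangle (a (r x)) (φ (e (r x))) (φ x)
      show dist (a (r x)) (φ x) ≤ ε / 2
      linarith
    · intro t ht
      refine haO (r ∘ t) fun i j hij => ?_
      by_contra hne
      obtain ⟨l, hl, hl'⟩ := ht i j hne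
      exact hl' (congrFun hij ⟨l, lt_of_lt_of_le hl (le_max_right _ _)⟩)

/-- **Mycielski's theorem**: if `F` is residual in `Zⁿ`, then for generic continuous `φ : 2^ω → Z`
every `n`-tuple of images of distinct points lies in `F`. -/
theorem mycielski {Z : Type} [TopologicalSpace Z] [TopologicalSpace.IsCompletelyMetrizableSpace Z]
    {n : ℕ} {F : Set (Fin n → Z)} (hF : F ∈ residual (Fin n → Z)) :
    ∀ᶠ φ : C(Cantor, Z) in residual _, ∀ t : Fin n → Cantor, Function.Injective t → φ ∘ t ∈ F := by
  let _ := TopologicalSpace.upgradeIsCompletelyMetrizable Z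
  obtain ⟨S, ho, hd, hc, hS⟩ := mem_residual_iff.mp hF
  have h : ∀ᶠ φ : C(Cantor, Z) in residual _, ∀ O ∈ S, ∀ k : ℕ, ∀ t : Fin n → Cantor,
      (∀ i j, i ≠ j → ∃ l < k, t i l ≠ t j l) → φ ∘ t ∈ O :=
    (eventually_countable_ball hc).mpr fun O hO =>
      eventually_countable_forall.mpr fun k => mycielski_open (ho O hO) (hd O hO) k
  filter_upwards [h] with φ hφ t ht
  obtain ⟨k, hk⟩ := exists_level_of_injective ht
  exact hS fun O hO => hφ O hO k t hk

theorem exists_of_eventually_residual {Z : Type} [TopologicalSpace Z]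
    [TopologicalSpace.IsCompletelyMetrizableSpace Z] [Nonempty Z] {p : C(Cantor, Z) → Prop}
    (h : ∀ᶠ φ : C(Cantor, Z) in residual _, p φ) : ∃ φ, p φ := by
  let _ := TopologicalSpace.upgradeIsCompletelyMetrizable Z
  obtain ⟨z⟩ := ‹Nonempty Z›
  have : Nonempty C(Cantor, Z) := ⟨ContinuousMap.const _ z⟩
  exact (dense_of_mem_residual h).nonempty

/-! ### Bernstein sets -/

/-- A family of sets indexed by `J`, each of cardinality at least that of `J`, has an injective
choice function. It is built by recursion along a well-order of `J` of minimal type, so that fewer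
than `#J` values are excluded at each stage. -/
theorem exists_injective_choice {J Y : Type} (P : J → Set Y) (h : ∀ j, #J ≤ #(P j)) :
    ∃ g : J → Y, Function.Injective g ∧ ∀ j, g j ∈ P j := by
  obtain ⟨r, hwo, hr⟩ := exists_ord_eq J
  have key : ∀ (j : J) (g : ∀ k, r k j → Y), ∃ y ∈ P j, ∀ k hk, y ≠ g k hk := by
    intro j g
    by_contra! hcon
    have h1 : P j ⊆ range fun k : {k // r k j} => g k.1 k.2 := fun y hy => by
      obtain ⟨k, hk, e⟩ := hcon y hy
      exact ⟨⟨k, hk⟩, e.symm⟩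
    have h2 : #(P j) ≤ #{k // r k j} := (mk_le_mk_of_subset h1).trans mk_range_le
    have h3 := card_typein_lt j hr
    exact absurd ((h j).trans h2) (not_le.mpr h3)
  choose G hG hG' using key
  let g : J → Y := hwo.wf.fix fun j rec => G j rec
  have hg : ∀ j, g j = G j fun k _ => g k := fun j => hwo.wf.fix_eq _ _
  refine ⟨g, ?_, fun j => hg j ▸ hG _ _⟩
  have hne : ∀ j k, r k j → g j ≠ g k := fun j k hk => by
    rw [hg j]; exact hG' j _ k hk
  intro a b hab
  rcases trichotomous_of r a b with h' | h' | h'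
  · exact absurd hab.symm (hne b a h')
  · exact h'
  · exact absurd hab (hne a b h')

/-- A Bernstein set: at most continuum many sets of cardinality at least `𝔠` can be split
simultaneously by a single set `S`. -/
theorem exists_bernstein {J Y : Type} (hJ : #J ≤ 𝔠) (P : J → Set Y) (h : ∀ j, 𝔠 ≤ #(P j)) :
    ∃ S : Set Y, ∀ j, (P j ∩ S).Nonempty ∧ (P j \ S).Nonempty := by
  have hb : #(J × Bool) ≤ 𝔠 := by
    rw [mk_prod]
    simp only [lift_id, mk_bool]
    exact mul_le_of_le aleph0_le_continuum hJ (nat_lt_continuum 2).le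
  obtain ⟨g, hg, hgP⟩ := exists_injective_choice (fun p : J × Bool => P p.1)
    fun p => hb.trans (h p.1)
  refine ⟨range fun j => g (j, true), fun j => ⟨⟨g (j, true), hgP (j, true), j, rfl⟩,
    ⟨g (j, false), hgP (j, false), ?_⟩⟩⟩
  rintro ⟨k, hk⟩
  simpa using hg hk

/-! ### Baire measurable partitions into meagre pieces -/

/-- If `f` is continuous on a residual set `H` and its fibres over `H` are meagre, then `H`
contains a copy of the Cantor space on which `f` is injective. -/
theorem exists_injective_on_fibres {Z Y : Type} [TopologicalSpace Z] [PolishSpace Z] [Nonempty Z]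
    [TopologicalSpace Y] [T2Space Y] {f : Z → Y} {H : Set Z} (hH : H ∈ residual Z)
    (hf : ContinuousOn f H) (hm : ∀ x ∈ H, IsMeagre (f ⁻¹' {f x})) :
    ∃ φ : C(Cantor, Z), (∀ a, φ a ∈ H) ∧ Function.Injective (f ∘ φ) := by
  have hHi : ∀ (n : ℕ) (i : Fin n), ∀ᶠ z : Fin n → Z in residual _, z i ∈ H := fun n i =>
    tendsto_residual_of_isOpenMap (continuous_apply i) (isOpenMap_eval i) hH
  let D : Set (Fin 2 → Z) := {z | z 0 ∈ H ∧ z 1 ∈ H ∧ f (z 0) = f (z 1)}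
  -- `D` is nowhere dense: an open set inside its closure meets a section `{z | z 1 = p 1}` with
  -- `p 1 ∈ H`, on which almost every point has a different `f`-value, and by continuity of `f` on
  -- `H` the two values stay apart in a neighbourhood.
  have hD : (closure D)ᶜ ∈ residual (Fin 2 → Z) := by
    refine residual_of_dense_open isClosed_closure.isOpen_compl ?_
    rw [← interior_eq_empty_iff_dense_compl, ← not_nonempty_iff_eq_empty]
    intro hne
    obtain ⟨p, hpV, -, hp1⟩ := (dense_of_mem_residual
      ((hHi 2 0).and (hHi 2 1))).inter_open_nonempty _ isOpen_interior hne
    have hc : Continuous fun a : Z => ![a, p 1] := by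
      refine continuous_pi fun i => ?_
      fin_cases i
      · exact continuous_id
      · exact continuous_const
    have hU := isOpen_interior (s := closure D) |>.preimage hc
    have hpU : p 0 ∈ (fun a : Z => ![a, p 1]) ⁻¹' interior (closure D) := by
      have : ![p 0, p 1] = p := by ext i; fin_cases i <;> rfl
      simpa [this] using hpV
    obtain ⟨a, haU, haH, haf⟩ := (dense_of_mem_residual
      (inter_mem hH (hm _ hp1))).inter_open_nonempty _ hU ⟨_, hpU⟩
    have hne : f a ≠ f (p 1) := fun h => haf h
    obtain ⟨A, B, hA, hB, haA, hpB, hAB⟩ := t2_separation hne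
    obtain ⟨U, hU1, hU2⟩ := mem_nhdsWithin_iff_exists_mem_nhds_inter.mp
      (hf a haH (hA.mem_nhds haA))
    obtain ⟨V, hV1, hV2⟩ := mem_nhdsWithin_iff_exists_mem_nhds_inter.mp
      (hf (p 1) hp1 (hB.mem_nhds hpB))
    have h1 : ∀ᶠ z : Fin 2 → Z in 𝓝 ![a, p 1], z 0 ∈ U :=
      (continuous_apply (0 : Fin 2)).continuousAt (x := ![a, p 1]) hU1
    have h2 : ∀ᶠ z : Fin 2 → Z in 𝓝 ![a, p 1], z 1 ∈ V :=
      (continuous_apply (1 : Fin 2)).continuousAt (x := ![a, p 1]) hV1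
    obtain ⟨z, ⟨hz0, hz1⟩, hzH0, hzH1, hz⟩ :=
      mem_closure_iff_nhds.mp (interior_subset haU) _ (h1.and h2)
    exact disjoint_left.mp hAB (hU2 ⟨hz0, hzH0⟩) (hz ▸ hV2 ⟨hz1, hzH1⟩)
  obtain ⟨φ, hφ1, hφ2⟩ := exists_of_eventually_residual
    ((mycielski (hHi 1 0)).and (mycielski hD))
  have hφH : ∀ a, φ a ∈ H := fun a =>
    hφ1 (fun _ => a) (Function.injective_of_subsingleton _)
  refine ⟨φ, hφH, fun a b hab => ?_⟩
  by_contra hne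
  refine hφ2 ![a, b] ?_ (subset_closure ⟨hφH _, hφH _, hab⟩)
  intro i j hij
  fin_cases i <;> fin_cases j <;> simp_all

/-- Countably many sets with the Baire property all coincide with open sets on a common residual
set. -/
theorem exists_residual_trace_open {Z κ : Type*} [TopologicalSpace Z] [Countable κ]
    {A : κ → Set Z} (hA : ∀ k, BaireMeasurableSet (A k)) :
    ∃ G ∈ residual Z, ∀ k, ∃ O, IsOpen O ∧ ∀ x ∈ G, x ∈ A k ↔ x ∈ O := by
  choose O hO hAO using fun k => (hA k).residualEq_isOpen
  have h : ∀ᶠ x in residual Z, ∀ k, x ∈ A k ↔ x ∈ O k :=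
    eventually_countable_forall.mpr fun k => eventuallyEq_set.mp (hAO k)
  exact ⟨_, h, fun k => ⟨O k, hO k, fun x hx => hx k⟩⟩

/-- A Baire measurable map into a second countable space is continuous on a residual set. -/
theorem exists_residual_continuousOn {Z Y : Type*} [TopologicalSpace Z] [TopologicalSpace Y]
    [SecondCountableTopology Y] {f : Z → Y} (hf : BaireMeasurableFun f) :
    ∃ G ∈ residual Z, ContinuousOn f G := by
  have hb := TopologicalSpace.isBasis_countableBasis Y
  have := (TopologicalSpace.countable_countableBasis Y).to_subtype
  obtain ⟨G, hG, h⟩ := exists_residual_trace_open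
    (A := fun U : TopologicalSpace.countableBasis Y => f ⁻¹' U.1) fun U => hf _ (hb.isOpen U.2)
  refine ⟨G, hG, fun x hx => ?_⟩
  rw [ContinuousWithinAt, hb.nhds_hasBasis.tendsto_right_iff]
  rintro U ⟨hU, hxU⟩
  obtain ⟨O, hO, hOU⟩ := h ⟨U, hU⟩
  filter_upwards [mem_nhdsWithin_of_mem_nhds (hO.mem_nhds ((hOU x hx).mp hxU)),
    self_mem_nhdsWithin] with y hy hyG
  exact (hOU y hyG).mpr hy

/-- A nonmeagre set with the Baire property that lies in a union of meagre fibres of a Baire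
measurable `f` meets at least continuum many fibres. -/
theorem continuum_le_mk_image {Z Y : Type} [TopologicalSpace Z] [PolishSpace Z]
    [TopologicalSpace Y] [T2Space Y] [SecondCountableTopology Y] {f : Z → Y}
    (hf : BaireMeasurableFun f) {N : Set Y} (hN : ∀ y ∈ N, IsMeagre (f ⁻¹' {y})) {B : Set Z}
    (hB : BaireMeasurableSet B) (hBm : ¬ IsMeagre B) (hBN : B ⊆ f ⁻¹' N) : 𝔠 ≤ #(f '' B) := by
  obtain ⟨G, hG, hfG⟩ := exists_residual_continuousOn hf
  obtain ⟨W, hW, hBW⟩ := hB.residualEq_isOpen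
  have hWne : W.Nonempty := by
    by_contra hne
    rw [not_nonempty_iff_eq_empty] at hne
    subst hne
    refine hBm ?_
    filter_upwards [eventuallyEq_set.mp hBW] with x hx
    simpa using hx
  have : Nonempty W := hWne.to_subtype
  have : PolishSpace W := hW.polishSpace
  have hcont : Continuous (Subtype.val : W → Z) := continuous_subtype_val
  have hopen : IsOpenMap (Subtype.val : W → Z) := hW.isOpenMap_subtype_val
  -- `B` is residual in the nonempty open set `W`, so `exists_injective_on_fibres` applies to `f`
  -- restricted to `W`.
  have hH : {w : W | w.1 ∈ G ∧ w.1 ∈ B} ∈ residual W := by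
    have := tendsto_residual_of_isOpenMap hcont hopen (inter_mem hG (eventuallyEq_set.mp hBW))
    filter_upwards [this] with w hw
    exact ⟨hw.1, hw.2.mpr w.2⟩
  obtain ⟨φ, hφ, hinj⟩ := exists_injective_on_fibres (f := fun w : W => f w.1) hH
    (hfG.comp hcont.continuousOn fun w hw => hw.1)
    fun w hw => (hN _ (hBN hw.2)).preimage_of_isOpenMap hcont hopen
  have h1 : #Cantor = 𝔠 := by simp
  rw [← h1]
  refine mk_le_of_injective (f := fun a => (⟨f (φ a).1, _, (hφ a).2, rfl⟩ : f '' B)) ?_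
  intro a b hab
  exact hinj (congrArg Subtype.val hab)

theorem mk_borel_le {Z : Type} [TopologicalSpace Z] [SecondCountableTopology Z] :
    #{s : Set Z // @MeasurableSet _ (borel Z) s} ≤ 𝔠 := by
  have hb := TopologicalSpace.isBasis_countableBasis Z
  have h := MeasurableSpace.cardinal_measurableSet_le_continuum
    (s := TopologicalSpace.countableBasis Z)
    ((TopologicalSpace.countable_countableBasis Z).le_aleph0.trans aleph0_le_continuum)
  rw [← hb.borel_eq_generateFrom] at h
  exact h

theorem BaireMeasurableSet.exists_borel_subset {Z : Type*} [TopologicalSpace Z] [BaireSpace Z]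
    {A : Set Z} (hA : BaireMeasurableSet A) (hm : ¬ IsMeagre A) :
    ∃ B ⊆ A, @MeasurableSet _ (borel Z) B ∧ ¬ IsMeagre B := by
  borelize Z
  obtain ⟨O, hO, hAO⟩ := hA.residualEq_isOpen
  obtain ⟨H, hH, hHd, hHm⟩ := mem_residual.mp (eventuallyEq_set.mp hAO)
  refine ⟨O ∩ H, fun x hx => (hH hx.2).mpr hx.1, hO.measurableSet.inter hHd.measurableSet,
    fun h => hm ?_⟩
  filter_upwards [h, residual_of_dense_Gδ hHd hHm] with x hx hxH hxA
  exact hx ⟨(hH hxH).mp hxA, hxH⟩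

/-- The case of `isMeagre_preimage` in which `f` takes values in a second countable Hausdorff space.
If `f ⁻¹' N` were nonmeagre, there would be a set `S` splitting the image of every nonmeagre Borel
subset of `f ⁻¹' N`. One of `f ⁻¹' (N ∩ S)`, `f ⁻¹' (N \ S)` is then a nonmeagre set with the Baire
property, so it contains a nonmeagre Borel set, whose image is not split. -/
theorem isMeagre_preimage_aux {Z Y : Type} [TopologicalSpace Z] [PolishSpace Z]
    [TopologicalSpace Y] [T2Space Y] [SecondCountableTopology Y] {f : Z → Y}
    (hf : ∀ S, BaireMeasurableSet (f ⁻¹' S)) {N : Set Y}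
    (hN : ∀ y ∈ N, IsMeagre (f ⁻¹' {y})) : IsMeagre (f ⁻¹' N) := by
  by_contra hne
  let J := {B : {s : Set Z // @MeasurableSet _ (borel Z) s} // ¬ IsMeagre B.1 ∧ B.1 ⊆ f ⁻¹' N}
  obtain ⟨S, hS⟩ := exists_bernstein (J := J) ((mk_subtype_le _).trans mk_borel_le)
    (fun B => f '' B.1.1) fun B => by
      borelize Z
      exact continuum_le_mk_image (fun U _ => hf U) hN
        (MeasurableSet.baireMeasurableSet B.1.2) B.2.1 B.2.2
  have key : ∀ A ⊆ N, (∀ j : J, ¬ f '' j.1.1 ⊆ A) → IsMeagre (f ⁻¹' A) := by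
    intro A hAN h
    by_contra hA
    obtain ⟨B, hBA, hB, hBm⟩ := (hf A).exists_borel_subset hA
    exact h ⟨⟨B, hB⟩, hBm, hBA.trans (preimage_mono hAN)⟩ (image_subset_iff.mpr hBA)
  have h1 := key (N ∩ S) inter_subset_left fun j hj => by
    obtain ⟨y, hy, hyS⟩ := (hS j).2
    exact hyS (hj hy).2
  have h2 := key (N \ S) sdiff_subset fun j hj => by
    obtain ⟨y, hy, hyS⟩ := (hS j).1
    exact (hj hy).2 hyS
  refine hne ((h1.union h2).mono ?_)
  rw [← preimage_union, inter_union_sdiff]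

/-- If every union of fibres of `f` has the Baire property, then every union of meagre fibres is
meagre. -/
theorem isMeagre_preimage {Z : Type} [TopologicalSpace Z] [PolishSpace Z] {ι : Type*} {f : Z → ι}
    (hf : ∀ S, BaireMeasurableSet (f ⁻¹' S)) {N : Set ι}
    (hN : ∀ i ∈ N, IsMeagre (f ⁻¹' {i})) : IsMeagre (f ⁻¹' N) := by
  -- Replacing each index by a chosen point of its fibre turns `f` into a map `Z → Z` with the same
  -- fibres.
  choose r hr using fun i : range f => i.2
  let g : Z → Z := fun x => r ⟨f x, x, rfl⟩
  have hg : ∀ x, f (g x) = f x := fun x => hr _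
  have h := isMeagre_preimage_aux (f := g) (N := f ⁻¹' N) (fun S => ?_) fun y hy => ?_
  · refine h.mono fun x hx => ?_
    show f (g x) ∈ N
    rw [hg]; exact hx
  · convert hf {i | ∃ h : i ∈ range f, r ⟨i, h⟩ ∈ S} using 1
    ext x
    exact ⟨fun h => ⟨⟨x, rfl⟩, h⟩, fun ⟨_, h⟩ => h⟩
  · refine (hN _ hy).mono fun x hx => ?_
    have hx : g x = y := hx
    show f x = f y
    rw [← hx, hg]

/-- In a second countable Baire space, only countably many fibres of a map whose fibres have the
Baire property are nonmeagre: they agree up to meagre sets with disjoint nonempty open sets. -/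
theorem countable_nonmeagre_fibres {Z : Type*} [TopologicalSpace Z] [BaireSpace Z]
    [SecondCountableTopology Z] {ι : Type*} {f : Z → ι}
    (hf : ∀ i, BaireMeasurableSet (f ⁻¹' {i})) : {i | ¬ IsMeagre (f ⁻¹' {i})}.Countable := by
  choose O hO hfO using fun i => (hf i).residualEq_isOpen
  refine PairwiseDisjoint.countable_of_isOpen (s := O) ?_ (fun i _ => hO i) fun i hi => ?_
  · intro i _ j _ hij
    show Disjoint (O i) (O j)
    by_contra hd
    obtain ⟨x, hx, h1, h2⟩ := (dense_of_mem_residual (inter_mem (eventuallyEq_set.mp (hfO i))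
      (eventuallyEq_set.mp (hfO j)))).inter_open_nonempty _ ((hO i).inter (hO j))
      (not_disjoint_iff_nonempty_inter.mp hd)
    have hi : f x = i := h1.mpr hx.1
    have hj : f x = j := h2.mpr hx.2
    exact hij (hi.symm.trans hj)
  · by_contra hne
    rw [not_nonempty_iff_eq_empty] at hne
    refine hi ?_
    filter_upwards [eventuallyEq_set.mp (hfO i)] with x hx
    simpa [hne] using hx

/-! ### Baire measurable maps into metric spaces -/

/-- Every metric space `M` has a map `p : M → M` moving points by less than `ε`, all of whose
preimages are `F_σ`, whatever the weight of `M`. With respect to a well-order, `p x` is the least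
point within `ε` of `x`; as in Stone's proof of paracompactness, each fibre is a countable union of
closed sets that for fixed index form a metrically discrete family. -/
theorem exists_discrete_selector (M : Type*) [MetricSpace M] {ε : ℝ} (hε : 0 < ε) :
    ∃ p : M → M, (∀ x, dist x (p x) < ε) ∧
      ∀ S : Set M, ∃ C : ℕ → Set M, (∀ j, IsClosed (C j)) ∧ p ⁻¹' S = ⋃ j, C j := by
  obtain ⟨r, hwo⟩ := exists_wellFoundedLT M
  let near : M → Set M := fun x => {m | dist x m < ε}
  have hnear : ∀ x, (near x).Nonempty := fun x => ⟨x, by simpa [near] using hε⟩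
  let p : M → M := fun x => wellFounded_lt.min (near x) (hnear x)
  have hp : ∀ x, dist x (p x) < ε := fun x => wellFounded_lt.min_mem (near x) (hnear x)
  have hpmin : ∀ x m, m < p x → ε ≤ dist x m := fun x m hm => by
    by_contra h
    exact wellFounded_lt.not_lt_min (near x) (x := m) (not_le.mp h) hm
  refine ⟨p, hp, fun S => ?_⟩
  -- `E j m` is the part of the fibre over `m` that stays `1 / (j + 1)` inside the `ε`-ball at `m`;
  -- for `m ≠ m'` the sets `E j m` and `E j m'` are at distance at least `1 / (j + 1)`.
  let E : ℕ → M → Set M := fun j m =>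
    {x | dist x m + 1 / ((j : ℝ) + 1) ≤ ε ∧ ∀ m' < m, ε ≤ dist x m'}
  have hpos : ∀ j : ℕ, (0 : ℝ) < 1 / ((j : ℝ) + 1) := fun j => Nat.one_div_pos_of_nat
  have hEp : ∀ j m x, x ∈ E j m → p x = m := fun j m x hx => by
    rcases lt_trichotomy (p x) m with h | h | h
    · exact absurd (hp x) (not_lt.mpr (hx.2 _ h))
    · exact h
    · have := hpmin x m h
      have := hpos j
      linarith [hx.1]
  have hsep : ∀ j m m' x y, x ∈ E j m → y ∈ E j m' → m < m' →
      1 / ((j : ℝ) + 1) ≤ dist x y := fun j m m' x y hx hy hlt => by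
    have := hy.2 m hlt
    have := dist_triangle_left y m x
    linarith [hx.1]
  refine ⟨fun j => ⋃ m : S, E j m, fun j => ?_, ?_⟩
  · refine LocallyFinite.isClosed_iUnion (fun x => ?_) fun m => ?_
    · refine ⟨Metric.ball x (1 / ((j : ℝ) + 1) / 2), Metric.ball_mem_nhds _ (half_pos (hpos j)),
        Set.Subsingleton.finite ?_⟩
      rintro m ⟨y, hy, hyb⟩ m' ⟨z, hz, hzb⟩
      rw [Metric.mem_ball] at hyb hzb
      have h1 := dist_triangle_right y z x
      rcases lt_trichotomy m m' with h | h | h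
      · have := hsep j _ _ _ _ hy hz h
        linarith
      · exact h
      · have := hsep j _ _ _ _ hz hy h
        rw [dist_comm] at this
        linarith
    · have : E j m = {x | dist x m.1 + 1 / ((j : ℝ) + 1) ≤ ε} ∩
          ⋂ m' : M, ⋂ (_ : m' < m), {x | ε ≤ dist x m'} := by
        ext x; simp [E]
      rw [this]
      exact (isClosed_le (by fun_prop) (by fun_prop)).inter
        (isClosed_iInter fun m' => isClosed_iInter fun _ => isClosed_le (by fun_prop) (by fun_prop))
  · ext x
    simp only [mem_preimage, mem_iUnion]
    constructor
    · intro hx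
      obtain ⟨j, hj⟩ := exists_nat_one_div_lt (sub_pos.mpr (hp x))
      exact ⟨j, ⟨p x, hx⟩, by linarith, hpmin x⟩
    · rintro ⟨j, m, hx⟩
      rw [hEp j m x hx]
      exact m.2

/-- A Baire measurable map from a Polish space into an arbitrary metric space is continuous on a
residual set. The selectors `p k` of `exists_discrete_selector` define partitions to which
`isMeagre_preimage` applies, so on a residual set `p k ∘ c` takes countably many values, and there
the countably many balls around these values determine the convergence of `c`. -/
theorem exists_residual_continuousOn_metric {Z : Type} [TopologicalSpace Z] [PolishSpace Z]
    {M : Type*} [MetricSpace M] {c : Z → M} (hc : BaireMeasurableFun c) :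
    ∃ G ∈ residual Z, ContinuousOn c G := by
  have hpos : ∀ k : ℕ, (0 : ℝ) < 1 / ((k : ℝ) + 1) := fun k => Nat.one_div_pos_of_nat
  choose p hp hpS using fun k : ℕ => exists_discrete_selector M (hpos k)
  have hbm : ∀ k (S : Set M), BaireMeasurableSet ((p k ∘ c) ⁻¹' S) := fun k S => by
    obtain ⟨C, hC, hS⟩ := hpS k S
    rw [preimage_comp, hS, preimage_iUnion]
    exact BaireMeasurableSet.iUnion fun j => (hc _ (hC j).isOpen_compl).of_compl
  let Q : ℕ → Set M := fun k => {m | ¬ IsMeagre ((p k ∘ c) ⁻¹' {m})}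
  have hQ : ∀ k, (Q k).Countable := fun k => countable_nonmeagre_fibres fun m => hbm k {m}
  have hQc : ∀ᶠ x in residual Z, ∀ k, p k (c x) ∈ Q k :=
    eventually_countable_forall.mpr fun k => by
      have : IsMeagre ((p k ∘ c) ⁻¹' (Q k)ᶜ) :=
        isMeagre_preimage (hbm k) fun m hm => not_not.mp hm
      filter_upwards [this] with x hx
      exact not_not.mp hx
  have := fun k => (hQ k).to_subtype
  obtain ⟨G, hG, h⟩ := exists_residual_trace_open
    (A := fun q : (k : ℕ) × Q k => c ⁻¹' Metric.ball q.2.1 (1 / ((q.1 : ℝ) + 1)))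
    fun q => hc _ Metric.isOpen_ball
  refine ⟨_, inter_mem hG hQc, fun x hx => ?_⟩
  refine Metric.tendsto_nhds.mpr fun ε hε => ?_
  obtain ⟨k, hk⟩ := exists_nat_one_div_lt (half_pos hε)
  obtain ⟨O, hO, hOc⟩ := h ⟨k, ⟨p k (c x), hx.2 k⟩⟩
  have hxO : x ∈ O := (hOc x hx.1).mp (hp k (c x))
  filter_upwards [mem_nhdsWithin_of_mem_nhds (hO.mem_nhds hxO), self_mem_nhdsWithin] with y hy hyG
  have h1 : dist (c y) (p k (c x)) < 1 / ((k : ℝ) + 1) := (hOc y hyG.1).mpr hy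
  have h2 := hp k (c x)
  have := dist_triangle_right (c y) (c x) (p k (c x))
  linarith

/-! ### Ordered tuples in the Cantor space -/

theorem splitLevel_apply_ne {x y : Cantor} (h : x ≠ y) :
    x (splitLevel x y) ≠ y (splitLevel x y) := by
  classical
  simp only [splitLevel, h, dite_false]
  exact Nat.find_spec (Function.ne_iff.mp h)

theorem splitLevel_eq_of_agree {x y x' y' : Cantor} (h : x ≠ y)
    (hx : ∀ l ≤ splitLevel x y, x' l = x l) (hy : ∀ l ≤ splitLevel x y, y' l = y l) :
    x' ≠ y' ∧ splitLevel x' y' = splitLevel x y := by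
  classical
  have hs := splitLevel_apply_ne h
  have hne : x' ≠ y' := fun e => hs (by rw [← hx _ le_rfl, ← hy _ le_rfl, e])
  refine ⟨hne, ?_⟩
  have hmin : ∀ l < splitLevel x y, x l = y l := fun l hl => by
    simp only [splitLevel, h, dite_false] at hl
    exact not_not.mp (Nat.find_min (Function.ne_iff.mp h) hl)
  conv_lhs => simp only [splitLevel, hne, dite_false]
  rw [Nat.find_eq_iff]
  refine ⟨by rwa [hx _ le_rfl, hy _ le_rfl], fun l hl => ?_⟩
  rw [hx l hl.le, hy l hl.le, hmin l hl]
  exact not_not.mpr rfl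

theorem eventually_agree (x : Cantor) (k : ℕ) : ∀ᶠ x' in 𝓝 x, ∀ l ≤ k, x' l = x l := by
  have : ∀ᶠ x' in 𝓝 x, ∀ l ∈ Iic k, x' l = x l :=
    (eventually_all_finite (finite_Iic k)).mpr fun l _ => by
      have := (continuous_apply (A := fun _ : ℕ => Bool) l).continuousAt (x := x)
      exact this (isOpen_discrete {x l} |>.mem_nhds rfl)
  exact this

/-- Where two entries of a tuple differ, their splitting level and the value of the first entry at
that level are locally constant in the tuple. -/
theorem eventually_splitLevel_eq {n : ℕ} {X : Fin n → Cantor} {i j : Fin n} (h : X i ≠ X j) :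
    ∀ᶠ Y in 𝓝 X, Y i ≠ Y j ∧ splitLevel (Y i) (Y j) = splitLevel (X i) (X j) ∧
      Y i (splitLevel (X i) (X j)) = X i (splitLevel (X i) (X j)) := by
  have hi := (continuous_apply (A := fun _ : Fin n => Cantor) i).continuousAt (x := X)
    |>.eventually (eventually_agree (X i) (splitLevel (X i) (X j)))
  have hj := (continuous_apply (A := fun _ : Fin n => Cantor) j).continuousAt (x := X)
    |>.eventually (eventually_agree (X j) (splitLevel (X i) (X j)))
  filter_upwards [hi, hj] with Y h1 h2
  obtain ⟨h3, h4⟩ := splitLevel_eq_of_agree h h1 h2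
  exact ⟨h3, h4, h1 _ le_rfl⟩

/-- The tuples in `[2^ω]^n_⪯` form an open set, since their lexicographic order and the order of
their distances depend only on the locally constant splitting data. -/
theorem isOpen_ordTuples_univ (n : ℕ) (prec : Fin (n - 1) → Fin (n - 1) → Prop) :
    IsOpen (OrdTuples n prec univ) := by
  rw [isOpen_iff_mem_nhds]
  rintro X ⟨⟨-, hlex⟩, hord⟩
  have h : ∀ᶠ Y in 𝓝 X, ∀ i j : Fin n, i < j → Y i ≠ Y j ∧
      splitLevel (Y i) (Y j) = splitLevel (X i) (X j) ∧
      Y i (splitLevel (X i) (X j)) = X i (splitLevel (X i) (X j)) :=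
    eventually_all.mpr fun i => eventually_all.mpr fun j => by
      by_cases hij : i < j
      · filter_upwards [eventually_splitLevel_eq (hlex i j hij).1] with Y hY _
        exact hY
      · exact Eventually.of_forall fun Y h => absurd h hij
  filter_upwards [h] with Y hY
  have hgap : ∀ i : Fin (n - 1), gapIdx i < gapIdx' i := fun i => by
    simp [gapIdx, gapIdx', Fin.lt_def]
  refine ⟨⟨fun _ => mem_univ _, fun i j hij => ?_⟩, fun i j hij => ?_⟩
  · obtain ⟨h1, h2, h3⟩ := hY i j hij
    exact ⟨h1, by rw [h2, h3]; exact (hlex i j hij).2⟩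
  · rw [← hord i j hij]
    simp only [cdist, (hY _ _ (hgap i)).2.1, (hY _ _ (hgap j)).2.1]

/-- The range of a continuous injection of the Cantor space into itself is perfect. -/
theorem perfect_range {ψ : Cantor → Cantor} (hc : Continuous ψ) (hi : Function.Injective ψ) :
    PerfectSet (range ψ) := by
  refine ⟨⟨(isCompact_range hc).isClosed, preperfect_iff_nhds.mpr ?_⟩, range_nonempty ψ⟩
  rintro _ ⟨a, rfl⟩ U hU
  -- Flipping one coordinate of `a` further and further out gives points `≠ a` converging to `a`.
  have h : Tendsto (fun m => Function.update a m (!a m)) atTop (𝓝 a) := by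
    refine tendsto_pi_nhds.mpr fun l => tendsto_const_nhds.congr' ?_
    filter_upwards [eventually_gt_atTop l] with m hm
    simp [Function.update_of_ne hm.ne]
  obtain ⟨m, hm⟩ := ((hc.continuousAt.tendsto.comp h).eventually hU).exists
  refine ⟨_, ⟨hm, _, rfl⟩, fun he => ?_⟩
  have := congrFun (hi he) m
  simp at this

/-! ### The perfect subset -/

/-- Every Baire measurable map `c : [R]^n_⪯ → M`, `R ⊆ 2^ω` perfect and `M` a metric
space, is continuous when restricted to `[T]^n_⪯` for some perfect `T ⊆ R`. -/
theorem baire_measurable_restriction_continuous (n : ℕ)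
    (prec : Fin (n - 1) → Fin (n - 1) → Prop) (hprec : IsLinearOrder (Fin (n - 1)) prec)
    (R : Set Cantor) (hR : PerfectSet R) (M : Type*) [MetricSpace M]
    (c : ↥(OrdTuples n prec R) → M) (hc : BaireMeasurableFun c) :
    ∃ T : Set Cantor, T ⊆ R ∧ PerfectSet T ∧
      ∃ h : OrdTuples n prec T ⊆ OrdTuples n prec R,
        Continuous fun X : ↥(OrdTuples n prec T) => c (Set.inclusion h X) := by
  have hRc : IsClosed R := hR.1.closed
  have : PolishSpace Cantor := { }
  have : PolishSpace R := hRc.polishSpace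
  have : Nonempty R := hR.2.to_subtype
  let v : (Fin n → R) → (Fin n → Cantor) := fun z i => (z i).1
  have hv : Continuous v := by fun_prop
  let U : Set (Fin n → R) := v ⁻¹' OrdTuples n prec univ
  have hU : IsOpen U := (isOpen_ordTuples_univ n prec).preimage hv
  have : PolishSpace U := hU.polishSpace
  -- `[R]^n_⪯` is identified with an open subset `U` of the Polish space `Rⁿ`.
  let e : U ≃ₜ OrdTuples n prec R :=
    { toFun := fun z => ⟨v z.1, ⟨fun i => (z.1 i).2, z.2.1.2⟩, z.2.2⟩
      invFun := fun X => ⟨fun i => ⟨X.1 i, X.2.1.1 i⟩, ⟨fun _ => mem_univ _, X.2.1.2⟩, X.2.2⟩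
      left_inv := fun _ => rfl
      right_inv := fun _ => rfl
      continuous_toFun := by fun_prop
      continuous_invFun := by
        refine Continuous.subtype_mk (continuous_pi fun i => Continuous.subtype_mk ?_ _) _
        exact (continuous_apply i).comp continuous_subtype_val }
  obtain ⟨G, hG, hcG⟩ := exists_residual_continuousOn_metric (c := c ∘ e)
    fun V hV => (hc V hV).preimage e.continuous e.isOpenMap
  have hGm : IsMeagre (Subtype.val '' Gᶜ : Set (Fin n → R)) :=
    IsMeagre.image_val (by simpa [IsMeagre] using hG)
  -- Since `R` has no isolated points, pairs of distinct points are generic in `R²`; Mycielski's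
  -- theorem for this set makes the generic `φ` injective.
  have hdist : {z : Fin 2 → R | z 0 ≠ z 1} ∈ residual (Fin 2 → R) := by
    refine residual_of_dense_open (isOpen_ne_fun (by fun_prop) (by fun_prop)) fun z => ?_
    refine mem_closure_iff_nhds.mpr fun V hV => ?_
    by_cases hz : z 0 = z 1
    · have hup : Continuous fun a : R => Function.update z 0 a := by fun_prop
      have hV' : (fun a : R => Function.update z 0 a) ⁻¹' V ∈ 𝓝 (z 0) :=
        hup.continuousAt.preimage_mem_nhds (by simpa using hV)
      obtain ⟨V', hV'1, hV'2⟩ := mem_nhds_subtype _ _ _ |>.mp hV'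
      obtain ⟨y, ⟨hyV, hyR⟩, hne⟩ :=
        preperfect_iff_nhds.mp hR.1.acc (z 0).1 (z 0).2 V' hV'1
      refine ⟨Function.update z 0 ⟨y, hyR⟩, hV'2 hyV, ?_⟩
      simp only [ne_eq, mem_ofPred_eq, Function.update_self]
      rw [Function.update_of_ne (by decide), ← hz]
      exact fun h => hne (congrArg Subtype.val h)
    · exact ⟨z, mem_of_mem_nhds hV, hz⟩
  obtain ⟨φ, hφG, hφd⟩ := exists_of_eventually_residual ((mycielski hGm).and (mycielski hdist))
  have hφi : Function.Injective fun a => (φ a).1 := fun a b hab => by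
    by_contra hne
    refine hφd ![a, b] ?_ (Subtype.ext hab)
    intro i j hij
    fin_cases i <;> fin_cases j <;> simp_all
  have hTR : range (fun a => (φ a).1) ⊆ R := by
    rintro _ ⟨a, rfl⟩
    exact (φ a).2
  have hOT : OrdTuples n prec (range fun a => (φ a).1) ⊆ OrdTuples n prec R :=
    fun X hX => ⟨⟨fun i => hTR (hX.1.1 i), hX.1.2⟩, hX.2⟩
  refine ⟨_, hTR, perfect_range (by fun_prop) hφi, hOT, ?_⟩
  -- The entries of a tuple in `[T]^n_⪯` are distinct, hence images of distinct points under `φ`,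
  -- so the tuple avoids the meagre set `Gᶜ`.
  have hmem : ∀ X : OrdTuples n prec (range fun a => (φ a).1), e.symm (inclusion hOT X) ∈ G := by
    intro X
    choose t ht using X.2.1.1
    have hinj : Function.Injective t := by
      intro i j hij
      have hX : X.1 i = X.1 j := by rw [← ht i, ← ht j, hij]
      rcases lt_trichotomy i j with h | h | h
      · exact absurd hX (X.2.1.2 i j h).1
      · exact h
      · exact absurd hX.symm (X.2.1.2 j i h).1
    by_contra hX
    refine hφG t hinj ⟨_, hX, ?_⟩
    funext i
    exact Subtype.ext (ht i).symm
  have := hcG.comp_continuous (f := fun X => e.symm (inclusion hOT X))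
    (e.symm.continuous.comp (continuous_inclusion hOT)) hmem
  simpa [Function.comp_def] using this
end

section
/- For every Baire measurable mapping c : [2^ω]^2 → ω there exists a perfect subset T of 2^ω such that one of the following two statements holds: (1) c restricted to [T]^2 is constant; (2) for all (x_0,x_1), (y_0,y_1) ∈ [T]^2 (pairs written in increasing lexicographic order), c(x_0,x_1) = c(y_0,y_1) if and only if d(x_0,x_1) = d(y_0,y_1). -/
/-!
Since `c` is Baire measurable, it is continuous on a comeager set of pairs: the class of colour `v`
is there the trace of an open set `W v` (`exists_generic_colouring`). By a Baire category argument
in `ℕ → Cantor` there is a countable dense set `Q` of generic points any two of which form a generic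
pair (`exists_dense_generic`).

A perfect set is obtained as the closure of a sequence `a 0, a 1, …` of points of `Q`, where
`a (n + 1)` is chosen very close to an earlier point, its parent, and every point is a parent
infinitely often. With levels `m n` growing fast enough, any two points `x ≠ y` of the closure are
still a generic pair, and they are separated at exactly one step `n`, between the parent and
`a (n + 1)` (`exists_fusion`, `exists_perfect_of_step`). So the colour of `{x, y}` is the colour
`v n` chosen at that step, and the splitting level lies in `[m n, m (n + 1))` and depends only on
`n`; in particular the distance determines `n` and conversely.

It remains to choose the colours. Let `R v` be the closed set of points near which the colour `v`
keeps occurring. If some `R v` has nonempty interior, then every generic point of that interior has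
generic partners of colour `v` arbitrarily close to it, so all the `v n` can be taken to be `v` and
the closure is monochromatic. Otherwise a generic point `x` lies in no `R v`, so the colours of
`(x, y)` tend to infinity as `y` tends to `x`; then the `v n` can be taken strictly increasing, and
colour and distance determine each other.
-/

open Set

/-- `[T]^2` : lexicographically increasing pairs of elements of `T`. -/
def PairsSet (T : Set Cantor) : Set (Cantor × Cantor) :=
  {p | p.1 ∈ T ∧ p.2 ∈ T ∧ clex p.1 p.2}

open Filter Topology

/-! ### Agreement, splitting levels and the lexicographic order -/

/-- `x` and `y` have the same first `m` coordinates, i.e. lie in a common basic clopen set of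
level `m`. -/
def Agree (m : ℕ) (x y : Cantor) : Prop := ∀ i < m, x i = y i

theorem Agree.refl (m : ℕ) (x : Cantor) : Agree m x x := fun _ _ => rfl

theorem Agree.symm {m : ℕ} {x y : Cantor} (h : Agree m x y) : Agree m y x :=
  fun i hi => (h i hi).symm

theorem Agree.trans {m : ℕ} {x y z : Cantor} (h : Agree m x y) (h' : Agree m y z) :
    Agree m x z := fun i hi => (h i hi).trans (h' i hi)

theorem Agree.mono {m n : ℕ} {x y : Cantor} (hmn : m ≤ n) (h : Agree n x y) : Agree m x y :=
  fun i hi => h i (hi.trans_le hmn)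

theorem isOpen_agree (m : ℕ) (x : Cantor) : IsOpen {y | Agree m x y} := by
  have : {y | Agree m x y} = PiNat.cylinder x m := by
    ext y
    simp only [Agree, Set.mem_ofPred_eq, PiNat.mem_cylinder_iff, eq_comm]
  rw [this]
  exact PiNat.isOpen_cylinder _ x m

theorem eventually_agree_subset {U : Set Cantor} {x : Cantor} (hU : U ∈ 𝓝 x) :
    ∀ᶠ m in atTop, ∀ y, Agree m x y → y ∈ U := by
  obtain ⟨V, ⟨z, n, rfl⟩, hx, hV⟩ :=
    (PiNat.isTopologicalBasis_cylinders (fun _ : ℕ => Bool)).mem_nhds_iff.1 hU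
  filter_upwards [eventually_ge_atTop n] with m hm y hy
  apply hV
  rw [PiNat.mem_cylinder_iff] at hx ⊢
  intro i hi
  rw [← hx i hi, hy i (hi.trans_le hm)]

theorem eventually_agree_prod_subset {U : Set (Cantor × Cantor)} {x y : Cantor} (hU : IsOpen U)
    (hxy : (x, y) ∈ U) :
    ∀ᶠ m in atTop, ∀ x' y', Agree m x x' → Agree m y y' → (x', y') ∈ U := by
  obtain ⟨A, hA, B, hB, hAB⟩ := mem_nhds_prod_iff.1 (hU.mem_nhds hxy)
  filter_upwards [eventually_agree_subset hA, eventually_agree_subset hB] with m h1 h2 x' y' hx hy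
  exact hAB ⟨h1 _ hx, h2 _ hy⟩

theorem eventually_not_agree {x y : Cantor} (h : x ≠ y) : ∀ᶠ m in atTop, ¬ Agree m x y := by
  obtain ⟨i, hi⟩ := Function.ne_iff.1 h
  filter_upwards [eventually_gt_atTop i] with m hm hxy
  exact hi (hxy i hm)

theorem splitLevel_spec {x y : Cantor} (h : x ≠ y) :
    x (splitLevel x y) ≠ y (splitLevel x y) ∧ Agree (splitLevel x y) x y := by
  classical
  unfold splitLevel
  simp only [h, dite_false]
  refine ⟨Nat.find_spec (Function.ne_iff.mp h), fun i hi => ?_⟩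
  have := Nat.find_min (Function.ne_iff.mp h) hi
  simpa using this

theorem splitLevel_eq {x y : Cantor} {n : ℕ} (h : x n ≠ y n) (h' : Agree n x y) :
    splitLevel x y = n := by
  have hne : x ≠ y := fun e => h (by rw [e])
  obtain ⟨h1, h2⟩ := splitLevel_spec hne
  rcases lt_trichotomy (splitLevel x y) n with hlt | heq | hgt
  · exact absurd (h' _ hlt) h1
  · exact heq
  · exact absurd (h2 _ hgt) h

theorem splitLevel_comm (x y : Cantor) : splitLevel x y = splitLevel y x := by
  by_cases h : x = y
  · rw [h]
  · obtain ⟨h1, h2⟩ := splitLevel_spec h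
    exact (splitLevel_eq h1.symm h2.symm).symm

theorem agree_iff_le_splitLevel {x y : Cantor} (h : x ≠ y) (m : ℕ) :
    Agree m x y ↔ m ≤ splitLevel x y := by
  obtain ⟨h1, h2⟩ := splitLevel_spec h
  refine ⟨fun hm => ?_, fun hm => h2.mono hm⟩
  by_contra! hlt
  exact h1 (hm _ hlt)

/-- The splitting level of two points is determined by initial segments long enough to separate
them. -/
theorem splitLevel_congr {x y x' y' : Cantor} {m : ℕ} (hx : Agree m x x') (hy : Agree m y y')
    (h : ¬ Agree m x y) : splitLevel x' y' = splitLevel x y := by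
  have hne : x ≠ y := fun e => h (e ▸ Agree.refl m x)
  obtain ⟨h1, h2⟩ := splitLevel_spec hne
  have hlt : splitLevel x y < m := by
    by_contra! hle
    exact h (h2.mono hle)
  refine splitLevel_eq ?_ fun i hi => ?_
  · rwa [← hx _ hlt, ← hy _ hlt]
  · rw [← hx i (hi.trans hlt), ← hy i (hi.trans hlt), h2 i hi]

theorem cdist_eq_iff {x y x' y' : Cantor} :
    cdist x y = cdist x' y' ↔ splitLevel x y = splitLevel x' y' := by
  unfold cdist
  rw [one_div, one_div, inv_inj, add_left_inj, Nat.cast_inj]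

theorem clex_iff {x y : Cantor} :
    clex x y ↔ ∃ n, x n = false ∧ y n = true ∧ Agree n x y := by
  constructor
  · rintro ⟨hne, h⟩
    obtain ⟨h1, h2⟩ := splitLevel_spec hne
    refine ⟨_, h, ?_, h2⟩
    rw [h] at h1
    simpa using h1.symm
  · rintro ⟨n, hx, hy, h⟩
    have hn : x n ≠ y n := by simp [hx, hy]
    refine ⟨fun e => hn (by rw [e]), ?_⟩
    rw [splitLevel_eq hn h, hx]

theorem clex_total {x y : Cantor} (h : x ≠ y) : clex x y ∨ clex y x := by
  by_cases h' : x (splitLevel x y) = false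
  · exact Or.inl ⟨h, h'⟩
  · refine Or.inr ⟨h.symm, ?_⟩
    have := (splitLevel_spec h).1
    rw [splitLevel_comm y x]
    cases hx : x (splitLevel x y) <;> cases hy : y (splitLevel x y) <;> simp_all

theorem clex_asymm {x y : Cantor} (h : clex x y) : ¬ clex y x := by
  intro h'
  have h1 := (splitLevel_spec h.1).1
  have h2 := h'.2
  rw [splitLevel_comm y x] at h2
  exact h1 (h.2.trans h2.symm)

theorem isOpen_pairsSet_univ : IsOpen (PairsSet Set.univ) := by
  have : PairsSet Set.univ = ⋃ n : ℕ,
      {p : Cantor × Cantor | p.1 n = false ∧ p.2 n = true ∧ ∀ i < n, p.1 i = p.2 i} := by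
    ext p
    simp [PairsSet, clex_iff, Agree]
  rw [this]
  refine isOpen_iUnion fun n => ?_
  have e : {p : Cantor × Cantor | p.1 n = false ∧ p.2 n = true ∧ ∀ i < n, p.1 i = p.2 i} =
      {p | p.1 n = false} ∩ ({p | p.2 n = true} ∩ ⋂ i ∈ Set.Iio n, {p | p.1 i = p.2 i}) := by
    ext p
    simp
  rw [e]
  have hd : ∀ f g : Cantor × Cantor → Bool, Continuous f → Continuous g →
      IsOpen {p | f p = g p} := fun f g hf hg =>
    (isOpen_discrete {q : Bool × Bool | q.1 = q.2}).preimage (hf.prodMk hg)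
  refine (hd _ _ (by fun_prop) (by fun_prop)).inter
    ((hd _ _ (by fun_prop) (by fun_prop)).inter ?_)
  exact (Set.finite_Iio n).isOpen_biInter fun i _ => hd _ _ (by fun_prop) (by fun_prop)

/-! ### Generic pairs -/

/-- A Baire measurable colouring extends to a symmetric colouring `C` of ordered pairs which, on a
countable intersection of dense open sets `D k`, is continuous off the diagonal: there the colour
class of `v` is the trace of an open set `W v`. -/
theorem exists_generic_colouring (c : ↥(PairsSet Set.univ) → ℕ) (hc : BaireMeasurableFun c) :
    ∃ (C : Cantor → Cantor → ℕ) (D W : ℕ → Set (Cantor × Cantor)),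
      (∀ p : ↥(PairsSet Set.univ), C (p : Cantor × Cantor).1 (p : Cantor × Cantor).2 = c p) ∧
      (∀ x y, C x y = C y x) ∧
      (∀ k, IsOpen (D k)) ∧ (∀ k, Dense (D k)) ∧ (∀ v, IsOpen (W v)) ∧
      (∀ v x, (x, x) ∉ W v) ∧
      ∀ x y v, x ≠ y → (∀ k, (x, y) ∈ D k) → (C x y = v ↔ (x, y) ∈ W v) := by
  classical
  choose u hu hcu using fun v : ℕ => (hc {v} (isOpen_discrete _)).residualEq_isOpen
  have hmeagre : IsMeagre (⋃ v, (Subtype.val '' {p | ¬ (c p = v ↔ p ∈ u v)})) := by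
    refine isMeagre_iUnion fun v => IsMeagre.image_val ?_
    have h := eventuallyEq_set.1 (hcu v)
    rw [IsMeagre]
    filter_upwards [h] with p hp
    simpa using hp
  obtain ⟨t, hts, htG, htd⟩ := mem_residual.1 hmeagre
  obtain ⟨D, hDo, rfl⟩ := htG.eq_iInter_nat
  have hDd : ∀ k, Dense (D k) := fun k => htd.mono (Set.iInter_subset _ k)
  have key : ∀ (p : ↥(PairsSet Set.univ)) v, (∀ k, (p : Cantor × Cantor) ∈ D k) →
      (c p = v ↔ p ∈ u v) := by
    intro p v hp
    by_contra hcon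
    exact hts (Set.mem_iInter.2 hp) (Set.mem_iUnion.2 ⟨v, p, hcon, rfl⟩)
  let O : ℕ → Set (Cantor × Cantor) := fun v => Subtype.val '' u v
  have hO : ∀ v, IsOpen (O v) := fun v => isOpen_pairsSet_univ.isOpenMap_subtype_val _ (hu v)
  have hmem : ∀ {x y : Cantor}, clex x y → (x, y) ∈ PairsSet Set.univ :=
    fun h => ⟨trivial, trivial, h⟩
  have hOclex : ∀ {v x y}, (x, y) ∈ O v → clex x y := by
    rintro v x y ⟨p, -, hp⟩
    have := p.2.2.2
    rwa [hp] at this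
  let C : Cantor → Cantor → ℕ := fun x y =>
    if h : clex x y then c ⟨(x, y), hmem h⟩ else if h : clex y x then c ⟨(y, x), hmem h⟩ else 0
  have hC1 : ∀ {x y} (h : clex x y), C x y = c ⟨(x, y), hmem h⟩ := by
    intro x y h
    simp [C, h]
  have hC2 : ∀ {x y} (h : clex y x), C x y = c ⟨(y, x), hmem h⟩ := by
    intro x y h
    simp [C, h, clex_asymm h]
  have hCO : ∀ {x y} v, clex x y → (∀ k, (x, y) ∈ D k) → (C x y = v ↔ (x, y) ∈ O v) := by
    intro x y v h hk
    rw [hC1 h, key ⟨(x, y), hmem h⟩ v hk]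
    constructor
    · exact fun h' => ⟨_, h', rfl⟩
    · rintro ⟨p, hp, hpe⟩
      have : p = ⟨(x, y), hmem h⟩ := Subtype.ext hpe
      rwa [← this]
  have hCs : ∀ x y, C x y = C y x := by
    intro x y
    by_cases e : x = y
    · rw [e]
    rcases clex_total e with h | h
    · rw [hC1 h, hC2 h]
    · rw [hC1 h, hC2 h]
  refine ⟨C, fun k => D k ∩ Prod.swap ⁻¹' D k, fun v => O v ∪ Prod.swap ⁻¹' O v, ?_, hCs, ?_, ?_,
    ?_, ?_, ?_⟩
  · exact fun p => hC1 p.2.2.2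
  · exact fun k => (hDo k).inter ((hDo k).preimage continuous_swap)
  · exact fun k => (hDd k).inter_of_isOpen_left
      ((hDd k).preimage (Homeomorph.prodComm Cantor Cantor).isOpenMap) (hDo k)
  · exact fun v => (hO v).union ((hO v).preimage continuous_swap)
  · rintro v x (h | h)
    · exact (hOclex h).1 rfl
    · exact (hOclex h).1 rfl
  · intro x y v hne hk
    rcases clex_total hne with h | h
    · rw [hCO v h fun k => (hk k).1]
      refine ⟨Or.inl, ?_⟩
      rintro (h' | h')
      · exact h'
      · exact absurd (hOclex h') (clex_asymm h)
    · rw [hCs, hCO v h fun k => (hk k).2]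
      refine ⟨Or.inr, ?_⟩
      rintro (h' | h')
      · exact absurd (hOclex h') (clex_asymm h)
      · exact h'

/-- A Mycielski-type lemma: some dense set consists of points generic for the `H k`, any two of
which form a pair generic for the `D k`. It is the range of a generic point of the Baire space
`ℕ → Cantor`. -/
theorem exists_dense_generic {D : ℕ → Set (Cantor × Cantor)} (hDo : ∀ k, IsOpen (D k))
    (hDd : ∀ k, Dense (D k)) {H : ℕ → Set Cantor} (hHo : ∀ k, IsOpen (H k))
    (hHd : ∀ k, Dense (H k)) :
    ∃ Q : Set Cantor, Dense Q ∧ (∀ x ∈ Q, ∀ k, x ∈ H k) ∧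
      ∀ x ∈ Q, ∀ y ∈ Q, x ≠ y → ∀ k, (x, y) ∈ D k := by
  have h1 : ∀ᶠ q in residual (ℕ → Cantor), ∀ i k, q i ∈ H k := by
    refine eventually_countable_forall.2 fun i => eventually_countable_forall.2 fun k => ?_
    exact residual_of_dense_open ((hHo k).preimage (continuous_apply i))
      ((hHd k).preimage (isOpenMap_eval i))
  have h2 : ∀ᶠ q in residual (ℕ → Cantor), ∀ i j k, i ≠ j → (q i, q j) ∈ D k := by
    refine eventually_countable_forall.2 fun i => eventually_countable_forall.2 fun j =>
      eventually_countable_forall.2 fun k => ?_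
    by_cases hij : i = j
    · exact Eventually.of_forall fun q h => absurd hij h
    have hopen : IsOpen {q : ℕ → Cantor | (q i, q j) ∈ D k} :=
      (hDo k).preimage ((continuous_apply i).prodMk (continuous_apply j))
    refine mem_of_superset (residual_of_dense_open hopen ?_) fun q hq _ => hq
    -- Moving only the coordinates `i` and `j` of a given sequence already reaches `D k`.
    rw [dense_iff_inter_open]
    rintro U hU ⟨q, hq⟩
    let F : Cantor × Cantor → ℕ → Cantor := fun z =>
      Function.update (Function.update q i z.1) j z.2
    have hF₀ : Continuous fun z : Cantor × Cantor => Function.update q i z.1 :=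
      continuous_const.update i continuous_fst
    have hF : Continuous F := hF₀.update j continuous_snd
    have hFq : F (q i, q j) = q := by simp [F]
    obtain ⟨z, hzU, hzD⟩ := dense_iff_inter_open.1 (hDd k) _ (hU.preimage hF)
      ⟨(q i, q j), by rwa [Set.mem_preimage, hFq]⟩
    refine ⟨F z, hzU, ?_⟩
    have e1 : F z i = z.1 := by simp [F, hij]
    have e2 : F z j = z.2 := by simp [F]
    rw [Set.mem_ofPred_eq, e1, e2]
    exact hzD
  have h3 : ∀ᶠ q in residual (ℕ → Cantor),
      ∀ B ∈ TopologicalSpace.countableBasis Cantor, ∃ i, q i ∈ B := by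
    refine (eventually_countable_ball (TopologicalSpace.countable_countableBasis Cantor)).2
      fun B hB => ?_
    have hBo := TopologicalSpace.isOpen_of_mem_countableBasis hB
    obtain ⟨b, hb⟩ := TopologicalSpace.nonempty_of_mem_countableBasis hB
    have hopen : IsOpen {q : ℕ → Cantor | ∃ i, q i ∈ B} := by
      rw [Set.ofPred_exists]
      exact isOpen_iUnion fun i => hBo.preimage (continuous_apply i)
    refine residual_of_dense_open hopen fun q => ?_
    -- Changing a single, far away coordinate of `q` to `b` is a small perturbation.
    have hlim : Tendsto (fun n => Function.update q n b) atTop (𝓝 q) := by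
      refine tendsto_pi_nhds.2 fun i => tendsto_const_nhds.congr' ?_
      filter_upwards [eventually_gt_atTop i] with n hn
      rw [Function.update_of_ne hn.ne]
    exact mem_closure_of_tendsto hlim (Eventually.of_forall fun n => ⟨n, by simpa using hb⟩)
  obtain ⟨q, hq1, hq2, hq3⟩ := (dense_of_mem_residual (h1.and (h2.and h3))).nonempty
  refine ⟨Set.range q, ?_, ?_, ?_⟩
  · refine (TopologicalSpace.isBasis_countableBasis Cantor).dense_iff.2 fun B hB _ => ?_
    obtain ⟨i, hi⟩ := hq3 B hB
    exact ⟨q i, hi, i, rfl⟩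
  · rintro _ ⟨i, rfl⟩ k
    exact hq1 i k
  · rintro _ ⟨i, rfl⟩ _ ⟨j, rfl⟩ hne k
    exact hq2 i j k fun e => hne (by rw [e])

/-! ### Fusion -/

/-- Fusion. Points `a 0, a 1, …` of `S` are added one at a time, `a (n + 1)` splitting off from
`a (par n)` above level `m n`; the levels `m n` grow so fast that the clopen sets around
`a 0, …, a n` determined by `m n` are disjoint, that their products lie in `D 0, …, D n`, and that
the product of those around the new point and its parent lies in a single `W (v n)`. The number
`M (n + 1)` exceeds the colour `v n`, and `P (M n) (v n)` is the requirement on the new colour: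
with `P M v` saying `M ≤ v` the colours increase. -/
theorem exists_fusion {D W : ℕ → Set (Cantor × Cantor)} (hD : ∀ k, IsOpen (D k))
    (hW : ∀ v, IsOpen (W v)) {S : Set Cantor} (hS : S.Nonempty)
    (hSD : ∀ x ∈ S, ∀ y ∈ S, x ≠ y → ∀ k, (x, y) ∈ D k) (P : ℕ → ℕ → Prop)
    (hstep : ∀ x ∈ S, ∀ m M, ∃ y ∈ S, Agree m x y ∧ x ≠ y ∧ ∃ v, (x, y) ∈ W v ∧ P M v)
    (par : ℕ → ℕ) (hpar : ∀ n, par n ≤ n) :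
    ∃ (a : ℕ → Cantor) (m v M : ℕ → ℕ), StrictMono m ∧
      (∀ n, Agree (m n) (a (par n)) (a (n + 1))) ∧
      (∀ n i j, i ≤ n → j ≤ n → i ≠ j → ¬ Agree (m n) (a i) (a j)) ∧
      (∀ n i j k, i ≤ n → j ≤ n → i ≠ j → k ≤ n → ∀ x y, Agree (m n) (a i) x →
        Agree (m n) (a j) y → (x, y) ∈ D k) ∧
      (∀ n x y, Agree (m (n + 1)) (a (par n)) x → Agree (m (n + 1)) (a (n + 1)) y →
        (x, y) ∈ W (v n)) ∧
      ∀ n, P (M n) (v n) ∧ v n < M (n + 1) := by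
  -- A stage is a triple `(a, m, M)`; at stage `n` only `a 0, …, a n` are meaningful.
  let Inv : ℕ → (ℕ → Cantor) × ℕ × ℕ → Prop := fun n s =>
    (∀ i ≤ n, s.1 i ∈ S) ∧
    (∀ i j, i ≤ n → j ≤ n → i ≠ j → ¬ Agree s.2.1 (s.1 i) (s.1 j)) ∧
    ∀ i j k, i ≤ n → j ≤ n → i ≠ j → k ≤ n → ∀ x y, Agree s.2.1 (s.1 i) x →
        Agree s.2.1 (s.1 j) y → (x, y) ∈ D k
  let R : ℕ → (ℕ → Cantor) × ℕ × ℕ → (ℕ → Cantor) × ℕ × ℕ → Prop := fun n s s' =>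
    (∀ i ≤ n, s'.1 i = s.1 i) ∧ s.2.1 < s'.2.1 ∧
    Agree s.2.1 (s.1 (par n)) (s'.1 (n + 1)) ∧
    ∃ v, (∀ x y, Agree s'.2.1 (s.1 (par n)) x → Agree s'.2.1 (s'.1 (n + 1)) y →
        (x, y) ∈ W v) ∧ P s.2.2 v ∧ v < s'.2.2
  have next : ∀ n (s : {s // Inv n s}), ∃ s' : {s' // Inv (n + 1) s'}, R n s.1 s'.1 := by
    rintro n ⟨⟨a, m, M⟩, hSa, hsep, -⟩
    dsimp only at hSa hsep
    obtain ⟨b, hbS, hab, hne, v, hv, hPv⟩ := hstep (a (par n)) (hSa _ (hpar n)) m M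
    let a' := Function.update a (n + 1) b
    have ha' : ∀ i ≤ n, a' i = a i := fun i hi => Function.update_of_ne (by omega) _ _
    have hb' : a' (n + 1) = b := Function.update_self _ _ _
    have hSa' : ∀ i ≤ n + 1, a' i ∈ S := by
      intro i hi
      rcases Nat.le_succ_iff.1 hi with h | h
      · rw [ha' i h]; exact hSa i h
      · rw [h, hb']; exact hbS
    have hnew : ∀ i ≤ n, a i ≠ b := by
      intro i hi e
      by_cases hip : i = par n
      · exact hne (by rw [← hip, e])
      · exact hsep i (par n) hi (hpar n) hip (e ▸ hab.symm)
    have hinj : ∀ i j, i ≤ n + 1 → j ≤ n + 1 → i ≠ j → a' i ≠ a' j := by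
      intro i j hi hj hij
      rcases Nat.le_succ_iff.1 hi with h | h <;> rcases Nat.le_succ_iff.1 hj with h' | h'
      · rw [ha' i h, ha' j h']
        exact fun e => hsep i j h h' hij (e ▸ Agree.refl _ _)
      · rw [ha' i h, h', hb']; exact hnew i h
      · rw [ha' j h', h, hb']; exact (hnew j h').symm
      · omega
    have e1 : ∀ᶠ m' in atTop, ∀ i ∈ Set.Iic (n + 1), ∀ j ∈ Set.Iic (n + 1), i ≠ j →
        ¬ Agree m' (a' i) (a' j) := by
      refine (eventually_all_finite (Set.finite_Iic _)).2 fun i hi =>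
        (eventually_all_finite (Set.finite_Iic _)).2 fun j hj => ?_
      by_cases hij : i = j
      · exact Eventually.of_forall fun _ h => absurd hij h
      · filter_upwards [eventually_not_agree (hinj i j hi hj hij)] with m' h _ using h
    have e2 : ∀ᶠ m' in atTop, ∀ i ∈ Set.Iic (n + 1), ∀ j ∈ Set.Iic (n + 1),
        ∀ k ∈ Set.Iic (n + 1), i ≠ j → ∀ x y, Agree m' (a' i) x → Agree m' (a' j) y →
          (x, y) ∈ D k := by
      refine (eventually_all_finite (Set.finite_Iic _)).2 fun i hi =>
        (eventually_all_finite (Set.finite_Iic _)).2 fun j hj =>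
        (eventually_all_finite (Set.finite_Iic _)).2 fun k _ => ?_
      by_cases hij : i = j
      · exact Eventually.of_forall fun _ h => absurd hij h
      · filter_upwards [eventually_agree_prod_subset (hD k)
          (hSD _ (hSa' i hi) _ (hSa' j hj) (hinj i j hi hj hij) k)] with m' h _ using h
    obtain ⟨m', h1, h2, h3, h4⟩ := (e1.and (e2.and
      ((eventually_agree_prod_subset (hW v) hv).and (eventually_gt_atTop m)))).exists
    refine ⟨⟨⟨a', m', v + 1⟩, hSa', fun i j hi hj => h1 i hi j hj,
      fun i j k hi hj hij hk => h2 i hi j hj k hk hij⟩, ha', h4, ?_, v, ?_, hPv, Nat.lt_succ_self v⟩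
    · dsimp only; rw [hb']; exact hab
    · dsimp only; rw [hb']; exact h3
  choose f hf using next
  obtain ⟨x₀, hx₀⟩ := hS
  have inv0 : Inv 0 (fun _ => x₀, 0, 0) :=
    ⟨fun _ _ => hx₀, fun i j hi hj hij => absurd (by omega) hij,
      fun i j k hi hj hij => absurd (by omega) hij⟩
  let st : ∀ n, {s // Inv n s} := fun n => Nat.rec ⟨_, inv0⟩ (fun n s => f n s) n
  have hst : ∀ n, R n (st n).1 (st (n + 1)).1 := fun n => hf n (st n)
  let a : ℕ → Cantor := fun n => (st n).1.1 n
  have ha : ∀ n, ∀ i ≤ n, (st n).1.1 i = a i := by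
    intro n
    induction n with
    | zero =>
      intro i hi
      obtain rfl : i = 0 := by omega
      rfl
    | succ n ih =>
      intro i hi
      rcases Nat.le_succ_iff.1 hi with h | h
      · rw [(hst n).1 i h, ih i h]
      · rw [h]
  choose v hv using fun n => (hst n).2.2.2
  refine ⟨a, fun n => (st n).1.2.1, v, fun n => (st n).1.2.2, ?_, ?_, ?_, ?_, ?_, ?_⟩
  · exact strictMono_nat_of_lt_succ fun n => (hst n).2.1
  · intro n
    have := (hst n).2.2.1
    rwa [ha n _ (hpar n)] at this
  · intro n i j hi hj
    have := (st n).2.2.1 i j hi hj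
    rwa [ha n i hi, ha n j hj] at this
  · intro n i j k hi hj
    have := (st n).2.2.2 i j k hi hj
    rwa [ha n i hi, ha n j hj] at this
  · intro n
    have := (hv n).1
    rwa [ha n _ (hpar n)] at this
  · exact fun n => (hv n).2

/-- The closure `T` of a fusion sequence is perfect. Two distinct points of `T` are separated at
exactly one step `n`; their colour is then `v n`, and their splitting level is that of `a (n + 1)`
and its parent, which lies in `[m n, m (n + 1))`. Hence the colours of `[T]^2` are the `v n`, and
`n` and the distance determine each other. -/
theorem exists_perfect_of_step {C : Cantor → Cantor → ℕ} (hC : ∀ x y, C x y = C y x)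
    {D W : ℕ → Set (Cantor × Cantor)} (hD : ∀ k, IsOpen (D k)) (hW : ∀ v, IsOpen (W v))
    (hCW : ∀ x y v, x ≠ y → (∀ k, (x, y) ∈ D k) → (C x y = v ↔ (x, y) ∈ W v))
    {S : Set Cantor} (hS : S.Nonempty)
    (hSD : ∀ x ∈ S, ∀ y ∈ S, x ≠ y → ∀ k, (x, y) ∈ D k) (P : ℕ → ℕ → Prop)
    (hstep : ∀ x ∈ S, ∀ m M, ∃ y ∈ S, Agree m x y ∧ x ≠ y ∧ ∃ v, (x, y) ∈ W v ∧ P M v) :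
    ∃ (T : Set Cantor) (v M : ℕ → ℕ), PerfectSet T ∧ (∀ n, P (M n) (v n) ∧ v n < M (n + 1)) ∧
      ∃ l : ℕ → ℕ, StrictMono l ∧ ∀ x ∈ T, ∀ y ∈ T, x ≠ y →
        ∃ n, C x y = v n ∧ splitLevel x y = l n := by
  -- Every index is the parent of infinitely many steps.
  let par : ℕ → ℕ := fun n => (Nat.unpair n).1
  have hpar : ∀ n, par n ≤ n := Nat.unpair_left_le
  obtain ⟨a, m, v, M, hm, hagree, hsep, haD, haW, hP⟩ :=
    exists_fusion hD hW hS hSD P hstep par hpar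
  have hinj : ∀ i j, i ≠ j → a i ≠ a j := fun i j hij e =>
    hsep (max i j) i j (le_max_left _ _) (le_max_right _ _) hij (e ▸ Agree.refl _ _)
  have hcover0 : ∀ n j, ∃ i ≤ n, Agree (m n) (a i) (a j) := by
    intro n j
    induction j using Nat.strong_induction_on with
    | _ j ih =>
      by_cases hj : j ≤ n
      · exact ⟨j, hj, Agree.refl _ _⟩
      · obtain ⟨j, rfl⟩ : ∃ j', j = j' + 1 := ⟨j - 1, by omega⟩
        obtain ⟨i, hi, hi'⟩ := ih (par j) (Nat.lt_succ_of_le (hpar j))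
        exact ⟨i, hi, hi'.trans ((hagree j).mono (hm.monotone (by omega)))⟩
  have hcover : ∀ n, ∀ x ∈ closure (Set.range a), ∃ i ≤ n, Agree (m n) (a i) x := by
    intro n x hx
    obtain ⟨_, hy, j, rfl⟩ :=
      mem_closure_iff.1 hx _ (isOpen_agree (m n) x) (Agree.refl _ _)
    obtain ⟨i, hi, hi'⟩ := hcover0 n j
    exact ⟨i, hi, hi'.trans hy.symm⟩
  have hsplit : ∀ x ∈ closure (Set.range a), ∀ y ∈ closure (Set.range a), x ≠ y →
      ∃ n, ¬ Agree (m (n + 1)) x y ∧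
        ((Agree (m (n + 1)) (a (par n)) x ∧ Agree (m (n + 1)) (a (n + 1)) y) ∨
         (Agree (m (n + 1)) (a (par n)) y ∧ Agree (m (n + 1)) (a (n + 1)) x)) := by
    intro x hx y hy hxy
    have h0 : Agree (m 0) x y := by
      obtain ⟨i, hi, hi'⟩ := hcover 0 x hx
      obtain ⟨j, hj, hj'⟩ := hcover 0 y hy
      obtain rfl : i = 0 := by omega
      obtain rfl : j = 0 := by omega
      exact hi'.symm.trans hj'
    have hex : ∃ n, ¬ Agree (m n) x y :=
      (hm.tendsto_atTop.eventually (eventually_not_agree hxy)).exists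
    obtain ⟨n, hn, hn'⟩ : ∃ n, Agree (m n) x y ∧ ¬ Agree (m (n + 1)) x y := by
      by_contra! hcon
      obtain ⟨n, hn⟩ := hex
      exact hn (Nat.rec h0 (fun k hk => hcon k hk) n)
    refine ⟨n, hn', ?_⟩
    have hle : m n ≤ m (n + 1) := (hm (Nat.lt_succ_self n)).le
    obtain ⟨i, hi, hi'⟩ := hcover (n + 1) x hx
    obtain ⟨j, hj, hj'⟩ := hcover (n + 1) y hy
    have hij : i ≠ j := fun e => hn' (hi'.symm.trans (e ▸ hj'))
    have hsame : Agree (m n) (a i) (a j) :=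
      ((hi'.mono hle).trans hn).trans (hj'.mono hle).symm
    have hpareq : ∀ k ≤ n, Agree (m n) (a k) (a (n + 1)) → k = par n := by
      intro k hk hk'
      by_contra hne
      exact hsep n k (par n) hk (hpar n) hne (hk'.trans (hagree n).symm)
    rcases Nat.le_succ_iff.1 hi with h | h <;> rcases Nat.le_succ_iff.1 hj with h' | h'
    · exact absurd hsame (hsep n i j h h' hij)
    · subst h'
      obtain rfl := hpareq i h hsame
      exact Or.inl ⟨hi', hj'⟩
    · subst h
      obtain rfl := hpareq j h' hsame.symm
      exact Or.inr ⟨hj', hi'⟩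
    · omega
  have hgen : ∀ x ∈ closure (Set.range a), ∀ y ∈ closure (Set.range a), x ≠ y →
      ∀ k, (x, y) ∈ D k := by
    intro x hx y hy hxy k
    obtain ⟨n, hn, hkn⟩ := ((hm.tendsto_atTop.eventually (eventually_not_agree hxy)).and
      (eventually_ge_atTop k)).exists
    obtain ⟨i, hi, hi'⟩ := hcover n x hx
    obtain ⟨j, hj, hj'⟩ := hcover n y hy
    exact haD n i j k hi hj (fun e => hn (hi'.symm.trans (e ▸ hj'))) hkn x y hi' hj'
  have hparne : ∀ n, a (par n) ≠ a (n + 1) := fun n =>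
    hinj _ _ (Nat.lt_succ_of_le (hpar n)).ne
  have hpsep : ∀ n, ¬ Agree (m (n + 1)) (a (par n)) (a (n + 1)) := fun n =>
    hsep (n + 1) _ _ ((hpar n).trans n.le_succ) le_rfl (Nat.lt_succ_of_le (hpar n)).ne
  refine ⟨closure (Set.range a), v, M, ⟨Preperfect.perfect_closure ?_, ?_⟩, hP,
    fun n => splitLevel (a (par n)) (a (n + 1)), ?_, ?_⟩
  · rintro _ ⟨i, rfl⟩
    refine accPt_iff_nhds.2 fun U hU => ?_
    obtain ⟨N, hN⟩ := eventually_atTop.1 (eventually_agree_subset hU)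
    have hp : par (Nat.pair i N) = i := by simp [par]
    have hge : N ≤ m (Nat.pair i N) := (Nat.right_le_pair i N).trans (hm.le_apply)
    have h1 := hagree (Nat.pair i N)
    have h2 := hparne (Nat.pair i N)
    rw [hp] at h1 h2
    exact ⟨_, ⟨hN _ hge _ h1, _, rfl⟩, h2.symm⟩
  · exact (Set.range_nonempty a).closure
  · refine strictMono_nat_of_lt_succ fun n => ?_
    have h1 := (agree_iff_le_splitLevel (hparne n) (m (n + 1))).not.1 (hpsep n)
    have h2 := (agree_iff_le_splitLevel (hparne (n + 1)) (m (n + 1))).1 (hagree (n + 1))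
    omega
  · intro x hx y hy hxy
    obtain ⟨n, hn, ⟨h1, h2⟩ | ⟨h1, h2⟩⟩ := hsplit x hx y hy hxy
    · exact ⟨n, (hCW x y _ hxy (hgen x hx y hy hxy)).2 (haW n x y h1 h2),
        (splitLevel_congr h1 h2 (hpsep n)).symm ▸ rfl⟩
    · refine ⟨n, ?_, ?_⟩
      · rw [hC]
        exact (hCW y x _ hxy.symm (hgen y hy x hx hxy.symm)).2 (haW n y x h1 h2)
      · rw [splitLevel_comm, splitLevel_congr h1 h2 (hpsep n)]

/-! ### The dichotomy -/

/-- **Taylor.** For every Baire measurable `c : [2^ω]^2 → ω` there is a perfect `T ⊆ 2^ω`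
such that either `c` is constant on `[T]^2`, or for all pairs from `[T]^2`,
`c(x₀,x₁) = c(y₀,y₁)` iff `d(x₀,x₁) = d(y₀,y₁)`. -/
theorem taylor_theorem (c : ↥(PairsSet Set.univ) → ℕ) (hc : BaireMeasurableFun c) :
    ∃ T : Set Cantor, PerfectSet T ∧
      ((∃ v : ℕ, ∀ p : ↥(PairsSet Set.univ),
          (p : Cantor × Cantor) ∈ PairsSet T → c p = v) ∨
       (∀ p q : ↥(PairsSet Set.univ),
          (p : Cantor × Cantor) ∈ PairsSet T → (q : Cantor × Cantor) ∈ PairsSet T →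
          (c p = c q ↔
            cdist (p : Cantor × Cantor).1 (p : Cantor × Cantor).2 =
            cdist (q : Cantor × Cantor).1 (q : Cantor × Cantor).2))) := by
  obtain ⟨C, D, W, hCc, hC, hDo, hDd, hW, hWd, hCW⟩ := exists_generic_colouring c hc
  -- `R v` is the set of points near which the colour `v` keeps occurring.
  let R : ℕ → Set Cantor := fun v =>
    {x | ∀ m, ∃ y z, Agree m x y ∧ Agree m x z ∧ (y, z) ∈ W v}
  have hRclosed : ∀ v, IsClosed (R v) := by
    intro v
    refine isOpen_compl_iff.1 (isOpen_iff_mem_nhds.2 fun x hx => ?_)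
    simp only [R, Set.mem_compl_iff, Set.mem_ofPred_eq, not_forall] at hx
    obtain ⟨m, hx⟩ := hx
    filter_upwards [(isOpen_agree m x).mem_nhds (Agree.refl m x)] with x' hx' hmem
    obtain ⟨y, z, hy, hz, hyz⟩ := hmem m
    exact hx ⟨y, z, Agree.trans hx' hy, Agree.trans hx' hz, hyz⟩
  by_cases hcase : ∃ v, (interior (R v)).Nonempty
  · obtain ⟨v₀, hne⟩ := hcase
    let A : ℕ → Set Cantor := fun m => {x | ∃ y, Agree m y x ∧ (x, y) ∈ W v₀}
    have hAo : ∀ m, IsOpen (A m) := by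
      intro m
      have : A m = ⋃ y, ({x | Agree m y x} ∩ (fun x => (x, y)) ⁻¹' W v₀) := by
        ext x
        simp [A]
      rw [this]
      exact isOpen_iUnion fun y => (isOpen_agree m y).inter ((hW v₀).preimage (by fun_prop))
    obtain ⟨Q, hQd, hQH, hQD⟩ := exists_dense_generic hDo hDd
      (H := fun m => A m ∪ (closure (A m))ᶜ)
      (fun m => (hAo m).union isClosed_closure.isOpen_compl) (by
        intro m x
        by_cases hx : x ∈ closure (A m)
        · exact closure_mono Set.subset_union_left hx
        · exact subset_closure (Or.inr hx))
    have hQA : ∀ x ∈ Q ∩ interior (R v₀), ∀ m, x ∈ A m := by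
      rintro x ⟨hxQ, hxV⟩ m
      refine (hQH x hxQ m).resolve_right fun hx => hx (mem_closure_iff_nhds.2 fun U hU => ?_)
      obtain ⟨m', hm', hge⟩ := ((eventually_agree_subset hU).and (eventually_ge_atTop m)).exists
      obtain ⟨y, z, hy, hz, hyz⟩ := interior_subset hxV m'
      exact ⟨y, hm' y hy, z, (hz.symm.trans hy).mono hge, hyz⟩
    obtain ⟨T, v, M, hT, hv, l, -, hl⟩ := exists_perfect_of_step hC hDo hW hCW
      (S := Q ∩ interior (R v₀))
      (by
        rw [Set.inter_comm]
        exact dense_iff_inter_open.1 hQd _ isOpen_interior hne)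
      (fun x hx y hy => hQD x hx.1 y hy.1) (fun _ v => v = v₀) (by
        intro x hx m M
        obtain ⟨m', hm', hge⟩ := ((eventually_agree_subset (isOpen_interior.mem_nhds hx.2)).and
          (eventually_ge_atTop m)).exists
        obtain ⟨y₀, hy₀, hy₀W⟩ := hQA x hx m'
        obtain ⟨y, ⟨hy, hyW⟩, hyQ⟩ := dense_iff_inter_open.1 hQd
          ({y | Agree m' x y} ∩ (fun y => (x, y)) ⁻¹' W v₀)
          ((isOpen_agree m' x).inter ((hW v₀).preimage (by fun_prop))) ⟨y₀, hy₀.symm, hy₀W⟩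
        refine ⟨y, ⟨hyQ, hm' y hy⟩, Agree.mono hge hy, ?_, v₀, hyW, rfl⟩
        rintro rfl
        exact hWd v₀ x hyW)
    refine ⟨T, hT, Or.inl ⟨v₀, fun p hp => ?_⟩⟩
    obtain ⟨n, hn, -⟩ := hl _ hp.1 _ hp.2.1 hp.2.2.1
    rw [← hCc, hn, (hv n).1]
  · push Not at hcase
    obtain ⟨Q, hQd, hQH, hQD⟩ := exists_dense_generic hDo hDd (H := fun v => (R v)ᶜ)
      (fun v => (hRclosed v).isOpen_compl) (fun v => interior_eq_empty_iff_dense_compl.1 (hcase v))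
    obtain ⟨T, v, M, hT, hv, l, hlm, hl⟩ := exists_perfect_of_step hC hDo hW hCW (S := Q)
      hQd.nonempty hQD (fun M v => M ≤ v) (by
        intro x hx m M
        have hev : ∀ᶠ m' in atTop, ∀ v ∈ Set.Iio M, ∀ y, Agree m' x y → (x, y) ∉ W v := by
          refine (eventually_all_finite (Set.finite_Iio M)).2 fun v _ => ?_
          have := hQH x hx v
          simp only [R, Set.mem_compl_iff, Set.mem_ofPred_eq, not_forall] at this
          obtain ⟨k, hk⟩ := this
          filter_upwards [eventually_ge_atTop k] with m' hm' y hy hW'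
          exact hk ⟨x, y, Agree.refl _ _, hy.mono hm', hW'⟩
        obtain ⟨m', hm', hge⟩ := (hev.and (eventually_ge_atTop m)).exists
        -- Flipping the coordinate `m'` shows that `x` is not isolated.
        obtain ⟨y, ⟨hy, hyx⟩, hyQ⟩ := dense_iff_inter_open.1 hQd ({y | Agree m' x y} ∩ {x}ᶜ)
          ((isOpen_agree m' x).inter isOpen_compl_singleton)
          ⟨Function.update x m' (!x m'), fun i hi => (Function.update_of_ne hi.ne _ _).symm, by
            intro e
            have := congrFun e m'
            simp at this⟩
        have hne : x ≠ y := fun e => hyx e.symm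
        have hCv := (hCW x y _ hne (hQD x hx y hyQ hne)).1 rfl
        refine ⟨y, hyQ, Agree.mono hge hy, hne, C x y, hCv, ?_⟩
        by_contra! hlt
        exact hm' _ hlt y hy hCv)
    have hvm : StrictMono v := strictMono_nat_of_lt_succ fun n =>
      (hv n).2.trans_le (hv (n + 1)).1
    refine ⟨T, hT, Or.inr fun p q hp hq => ?_⟩
    obtain ⟨n, hn, hn'⟩ := hl _ hp.1 _ hp.2.1 hp.2.2.1
    obtain ⟨k, hk, hk'⟩ := hl _ hq.1 _ hq.2.1 hq.2.2.1
    rw [cdist_eq_iff, ← hCc, ← hCc, hn, hk, hn', hk', hvm.injective.eq_iff, hlm.injective.eq_iff]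
end
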